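/- Let (G,μ) be a discrete measured groupoid and let F ⊂ G be a Borel subset of finite measure. Let E ⊂ G \ F be a Borel subset on which both the source map s and range map r are injective. If (G,μ) is ergodic with atom-free unit space measure, then there exists a Borel subset D with E ⊂ D ⊂ G \ F such that r and s are injective on D and s(D) = G^0 up to null sets (equivalently, by invariance of μ, also r(D) = G^0 up to null sets). -/

import Mathlib

open MeasureTheory

/-- A (minimal formalization of a) discrete measured groupoid: a standard Borel groupoid
`G` with unit space `X`, Borel source and range maps with countable source fibers, and an
invariant measure `μ` on the unit space. -/
structure DMGroupoid (G X : Type) [MeasurableSpace G] [MeasurableSpace X] where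
  s : G → X
  r : G → X
  meas_s : Measurable s
  meas_r : Measurable r
  countable_fibers : ∀ x : X, (s ⁻¹' {x}).Countable
  μ : Measure X
  invariant : ∀ E : Set G, MeasurableSet E →
    ∫⁻ x, Measure.count (E ∩ s ⁻¹' {x}) ∂μ = ∫⁻ x, Measure.count (E ∩ r ⁻¹' {x}) ∂μ

/-- The extension of `μ` to a measure on the groupoid:
`μ(E) = ∫_{G⁰} #(E ∩ s⁻¹(x)) dμ(x)`. -/
noncomputable def DMGroupoid.gMeasure {G X : Type} [MeasurableSpace G] [MeasurableSpace X]
    (D : DMGroupoid G X) (E : Set G) : ENNReal :=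
  ∫⁻ x, Measure.count (E ∩ D.s ⁻¹' {x}) ∂D.μ

/-- Ergodicity (saturation form): for every Borel `A ⊆ G⁰` of positive measure the
saturation `A^G = {x : ∃ γ, s γ ∈ A, r γ = x}` has full measure. -/
def DMGroupoid.SatErgodic {G X : Type} [MeasurableSpace G] [MeasurableSpace X]
    (D : DMGroupoid G X) : Prop :=
  ∀ A : Set X, MeasurableSet A → D.μ A ≠ 0 →
    D.μ {x : X | ∃ γ : G, D.s γ ∈ A ∧ D.r γ = x}ᶜ = 0

/-- A continuous image of Baire space with nonzero outer measure contains a compact image with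
nonzero measure. -/
theorem exists_isCompact_measure_image_ne_zero {Y : Type*} [TopologicalSpace Y]
    [MeasurableSpace Y] (μ : Measure Y) [μ.OuterRegular] {g : (ℕ → ℕ) → Y} (hg : Continuous g)
    (h : μ (Set.range g) ≠ 0) : ∃ C : Set (ℕ → ℕ), IsCompact C ∧ μ (g '' C) ≠ 0 := by
  obtain ⟨c, hc0, hc⟩ := exists_between (pos_iff_ne_zero.2 h)
  have step : ∀ (k : ℕ) (S : {S : Set (ℕ → ℕ) // c < μ (g '' S)}),
      ∃ m : ℕ, c < μ (g '' (S.1 ∩ {x | x k ≤ m})) := by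
    rintro k ⟨S, hS⟩
    have hmono : Monotone fun m : ℕ => g '' (S ∩ {x | x k ≤ m}) := fun a b hab =>
      Set.image_mono fun x hx => ⟨hx.1, le_trans hx.2 hab⟩
    have hU : ⋃ m : ℕ, g '' (S ∩ {x | x k ≤ m}) = g '' S := by
      rw [← Set.image_iUnion, ← Set.inter_iUnion]
      congr 1
      exact Set.inter_eq_left.2 fun x _ => Set.mem_iUnion.2 ⟨x k, le_refl (x k)⟩
    rw [← hU, hmono.measure_iUnion] at hS
    exact lt_iSup_iff.1 hS
  choose m hm using step
  let T : ℕ → {S : Set (ℕ → ℕ) // c < μ (g '' S)} := fun k =>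
    Nat.rec ⟨Set.univ, by rwa [Set.image_univ]⟩
      (fun k S => ⟨S.1 ∩ {x | x k ≤ m k S}, hm k S⟩) k
  let n : ℕ → ℕ := fun k => m k (T k)
  have hT : ∀ k x, x ∈ (T k).1 ↔ ∀ i < k, x i ≤ n i := by
    intro k
    induction k with
    | zero => intro x; simp [T]
    | succ k ih =>
      intro x
      have : x ∈ (T (k + 1)).1 ↔ x ∈ (T k).1 ∧ x k ≤ n k := Iff.rfl
      rw [this, ih, Nat.forall_lt_succ_right]
  have hC : IsCompact (Set.univ.pi fun i => Set.Iic (n i)) :=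
    isCompact_univ_pi fun i => (Set.finite_Iic (n i)).isCompact
  refine ⟨_, hC, fun h0 => ?_⟩
  obtain ⟨U, hCU, hU, hUc⟩ := Set.exists_isOpen_lt_of_lt _ c (h0 ▸ hc0)
  have hx : ∀ k, ∃ x ∈ (T k).1, g x ∉ U := by
    intro k
    by_contra! hk
    exact absurd ((T k).2.trans_le (measure_mono (Set.image_subset_iff.2 hk))) hUc.not_gt
  choose x hxT hxU using hx
  obtain ⟨y, hy, φ, hφ, hlim⟩ := hC.tendsto_subseq (x := fun k i => min (x k i) (n i))
    fun k i _ => Set.mem_Iic.2 (min_le_right _ _)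
  have hlim' : Filter.Tendsto (x ∘ φ) Filter.atTop (nhds y) := by
    rw [tendsto_pi_nhds] at hlim ⊢
    intro i
    refine (hlim i).congr' ?_
    filter_upwards [Filter.eventually_gt_atTop i] with k hk
    exact min_eq_left ((hT _ _).1 (hxT (φ k)) i (hk.trans_le hφ.le_apply))
  obtain ⟨k, hk⟩ := (hlim'.eventually
    ((hU.preimage hg).mem_nhds (hCU (Set.mem_image_of_mem g hy)))).exists
  exact hxU _ hk

/-- A continuous map on a compact set has a Borel section, obtained by minimizing an injective
continuous real function on each fiber. -/
theorem IsCompact.exists_measurableSet_injOn_image_eq {G X : Type*} [TopologicalSpace G]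
    [T2Space G] [MeasurableSpace G] [BorelSpace G] [TopologicalSpace X] [T2Space X]
    [MeasurableSpace X] [BorelSpace X] {f : G → X} (hf : Continuous f) {φ : G → ℝ}
    (hφ : Continuous φ) (hinj : Function.Injective φ) {C : Set G} (hC : IsCompact C) :
    ∃ H ⊆ C, MeasurableSet H ∧ Set.InjOn f H ∧ f '' H = f '' C := by
  let bad : Set G := ⋃ q : ℚ, {c | (q : ℝ) < φ c} ∩ f ⁻¹' (f '' (C ∩ {d | φ d ≤ q}))
  have hbad : MeasurableSet bad := by
    refine MeasurableSet.iUnion fun q => ?_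
    refine (isOpen_lt continuous_const hφ).measurableSet.inter (hf.measurable ?_)
    exact ((hC.inter_right (isClosed_le hφ continuous_const)).image hf).isClosed.measurableSet
  have hle : ∀ c ∉ bad, ∀ d ∈ C, f d = f c → φ c ≤ φ d := by
    intro c hc d hd hdc
    by_contra! hlt
    obtain ⟨q, hq1, hq2⟩ := exists_rat_btwn hlt
    exact hc (Set.mem_iUnion.2 ⟨q, hq2, d, ⟨hd, hq1.le⟩, hdc⟩)
  refine ⟨C \ bad, Set.sdiff_subset, hC.measurableSet.diff hbad, ?_, ?_⟩
  · intro a ha b hb hab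
    exact hinj (le_antisymm (hle a ha.2 b hb.1 hab.symm) (hle b hb.2 a ha.1 hab))
  · refine (Set.image_mono Set.sdiff_subset).antisymm ?_
    rintro _ ⟨c, hc, rfl⟩
    obtain ⟨d, ⟨hd, hdc⟩, hmin⟩ :=
      (hC.inter_right (isClosed_singleton.preimage hf : IsClosed (f ⁻¹' {f c}))).exists_isMinOn
        ⟨c, hc, rfl⟩ hφ.continuousOn
    refine ⟨d, ⟨hd, fun hb => ?_⟩, hdc⟩
    obtain ⟨q, hq, e, ⟨he, heq⟩, hed⟩ := Set.mem_iUnion.1 hb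
    exact absurd ((hmin ⟨he, hed.trans hdc⟩).trans heq) (not_le.2 (Set.mem_ofPred.1 hq))

/-- A Borel set whose image has nonzero outer measure contains a Borel set on which the map is
injective and whose image has nonzero measure. -/
theorem MeasurableSet.exists_injOn_subset_measure_image_ne_zero {G X : Type*}
    [MeasurableSpace G] [MeasurableSpace X] [StandardBorelSpace G] [StandardBorelSpace X]
    (μ : Measure X) [IsFiniteMeasure μ] {f : G → X} (hf : Measurable f) {K : Set G}
    (hK : MeasurableSet K) (h : μ (f '' K) ≠ 0) :
    ∃ H ⊆ K, MeasurableSet H ∧ Set.InjOn f H ∧ μ (f '' H) ≠ 0 := by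
  let tG := upgradeStandardBorel G
  let := upgradeStandardBorel X
  obtain ⟨t, hle, hcont, ht⟩ := (hf.prodMk (measurable_embeddingReal G)).exists_continuous
  have hborel : @BorelSpace G t _ := by
    refine @BorelSpace.mk G t _ ?_
    rw [eq_borel_upgradeStandardBorel G]
    exact (borel_eq_borel_of_le ht tG.toPolishSpace hle).symm
  clear hle
  let := t
  have hKa : AnalyticSet K := hK.analyticSet
  rw [AnalyticSet] at hKa
  obtain rfl | ⟨g, hg, rfl⟩ := hKa
  · simp at h
  rw [← Set.range_comp] at h
  obtain ⟨C, hC, hC0⟩ := exists_isCompact_measure_image_ne_zero μ (hcont.fst.comp hg) h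
  obtain ⟨H, hHC, hH, hinj, himg⟩ := (hC.image hg).exists_measurableSet_injOn_image_eq hcont.fst
    hcont.snd (measurableEmbedding_embeddingReal G).injective
  refine ⟨H, hHC.trans (Set.image_subset_range g C), hH, hinj, ?_⟩
  rwa [himg, Set.image_image]

namespace DMGroupoid

variable {G X : Type} [MeasurableSpace G] [MeasurableSpace X]

theorem lintegral_count_inter_fiber [MeasurableSingletonClass G] (μ : Measure X) {p : G → X}
    {H : Set G} (hinj : Set.InjOn p H) (himg : MeasurableSet (p '' H)) :
    ∫⁻ x, Measure.count (H ∩ p ⁻¹' {x}) ∂μ = μ (p '' H) := by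
  rw [← lintegral_indicator_one himg]
  congr 1 with x
  by_cases hx : x ∈ p '' H
  · obtain ⟨γ, hγ, rfl⟩ := hx
    have : H ∩ p ⁻¹' {p γ} = {γ} := by
      ext δ
      exact ⟨fun h => hinj h.1 hγ h.2, by rintro rfl; exact ⟨hγ, rfl⟩⟩
    rw [this, Measure.count_singleton, Set.indicator_of_mem (Set.mem_image_of_mem p hγ),
      Pi.one_apply]
  · have : H ∩ p ⁻¹' {x} = ∅ :=
      Set.eq_empty_of_forall_notMem fun δ h => hx ⟨δ, h.1, h.2⟩
    rw [this, measure_empty, Set.indicator_of_notMem hx]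

theorem lintegral_count_inter_fiber_eq_zero (μ : Measure X) {p : G → X} {H : Set G}
    (h : μ (p '' H) = 0) : ∫⁻ x, Measure.count (H ∩ p ⁻¹' {x}) ∂μ = 0 := by
  rw [lintegral_congr_ae (g := 0), Pi.zero_def, lintegral_zero]
  filter_upwards [measure_eq_zero_iff_ae_notMem.1 h] with x hx
  have : H ∩ p ⁻¹' {x} = ∅ :=
    Set.eq_empty_of_forall_notMem fun δ h => hx ⟨δ, h.1, h.2⟩
  rw [this, measure_empty, Pi.zero_apply]

variable [StandardBorelSpace X] (D : DMGroupoid G X)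

/-- Almost every unit is the range of infinitely many arrows with source in a given set of
positive measure. -/
theorem ae_infinite_arrows (herg : D.SatErgodic) (hatom : ∀ x : X, D.μ {x} = 0) {A : Set X}
    (hA : MeasurableSet A) (hA0 : D.μ A ≠ 0) :
    ∀ᵐ x ∂D.μ, (D.s ⁻¹' A ∩ D.r ⁻¹' {x}).Infinite := by
  let := upgradeStandardBorel X
  have hbasis := TopologicalSpace.isBasis_countableBasis X
  have hae : ∀ᵐ x ∂D.μ, ∀ U ∈ TopologicalSpace.countableBasis X, D.μ (A ∩ U) ≠ 0 →
      ∃ γ, D.s γ ∈ A ∩ U ∧ D.r γ = x := by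
    refine (ae_ball_iff (TopologicalSpace.countable_countableBasis X)).2 fun U hU => ?_
    by_cases h0 : D.μ (A ∩ U) = 0
    · exact Filter.Eventually.of_forall fun x h => absurd h0 h
    · filter_upwards [mem_ae_iff.2 (herg _ (hA.inter (hbasis.isOpen hU).measurableSet) h0)]
        with x hx _ using hx
  filter_upwards [hae] with x hx hfin
  set Y := D.s '' (D.s ⁻¹' A ∩ D.r ⁻¹' {x})
  have hY : Y.Finite := hfin.image _
  have hAY : A ⊆ Y ∪ ⋃ U ∈ {U ∈ TopologicalSpace.countableBasis X | U ⊆ Yᶜ}, A ∩ U := by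
    intro a ha
    by_cases haY : a ∈ Y
    · exact Or.inl haY
    · obtain ⟨U, hU, haU, hUY⟩ := hbasis.exists_subset_of_mem_open haY hY.isClosed.isOpen_compl
      exact Or.inr (Set.mem_biUnion (⟨hU, hUY⟩ : U ∈ {U ∈ _ | U ⊆ Yᶜ}) ⟨ha, haU⟩)
  refine hA0 (measure_mono_null hAY (measure_union_null ?_ ?_))
  · rw [← Set.biUnion_of_singleton Y]
    exact (measure_biUnion_null_iff hY.countable).2 fun y _ => hatom y
  · refine (measure_biUnion_null_iff
      ((TopologicalSpace.countable_countableBasis X).mono fun U hU => hU.1)).2 fun U hU => ?_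
    by_contra h0
    obtain ⟨γ, hγ, hγx⟩ := hx U hU.1 h0
    exact hU.2 hγ.2 ⟨γ, ⟨hγ.1, hγx⟩, rfl⟩

variable [StandardBorelSpace G]

theorem measure_source_image_eq {H : Set G} (hH : MeasurableSet H) (hs : Set.InjOn D.s H)
    (hr : Set.InjOn D.r H) : D.μ (D.s '' H) = D.μ (D.r '' H) := by
  rw [← lintegral_count_inter_fiber D.μ hs (hH.image_of_measurable_injOn D.meas_s hs),
    ← lintegral_count_inter_fiber D.μ hr (hH.image_of_measurable_injOn D.meas_r hr)]
  exact D.invariant H hH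

/-- Outside a set of finite measure, there are enough arrows between any two sets of positive
measure to contain a partial isomorphism of positive measure. -/
theorem exists_partial_isomorphism_between [IsFiniteMeasure D.μ] (herg : D.SatErgodic)
    (hatom : ∀ x : X, D.μ {x} = 0) {F : Set G} (hF : MeasurableSet F)
    (hFfin : D.gMeasure F ≠ ⊤) {A B : Set X} (hA : MeasurableSet A) (hB : MeasurableSet B)
    (hA0 : D.μ A ≠ 0) (hB0 : D.μ B ≠ 0) :
    ∃ H ⊆ (D.s ⁻¹' A ∩ D.r ⁻¹' B) \ F, MeasurableSet H ∧ Set.InjOn D.s H ∧ Set.InjOn D.r H ∧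
      D.μ (D.s '' H) ≠ 0 := by
  have hK : MeasurableSet ((D.s ⁻¹' A ∩ D.r ⁻¹' B) \ F) :=
    ((D.meas_s hA).inter (D.meas_r hB)).diff hF
  have hpos : D.μ (D.r '' ((D.s ⁻¹' A ∩ D.r ⁻¹' B) \ F)) ≠ 0 := by
    intro h0
    refine hFfin (top_unique ?_)
    rw [gMeasure, D.invariant F hF]
    calc (⊤ : ENNReal) = ∫⁻ x, B.indicator (fun _ => ⊤) x ∂D.μ := by
          rw [lintegral_indicator_const hB, ENNReal.top_mul hB0]
      _ ≤ ∫⁻ x, Measure.count (F ∩ D.r ⁻¹' {x}) ∂D.μ := by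
          refine lintegral_mono_ae ?_
          filter_upwards [measure_eq_zero_iff_ae_notMem.1 h0,
            D.ae_infinite_arrows herg hatom hA hA0] with x hx hinf
          refine Set.indicator_apply_le' (fun hxB => ?_) (fun _ => zero_le)
          have hsub : D.s ⁻¹' A ∩ D.r ⁻¹' {x} ⊆ F ∩ D.r ⁻¹' {x} := by
            refine fun γ hγ => ⟨?_, hγ.2⟩
            by_contra hγF
            exact hx ⟨γ, ⟨⟨hγ.1, by rwa [Set.mem_preimage, hγ.2]⟩, hγF⟩, hγ.2⟩
          exact (Measure.count_apply_infinite (hinf.mono hsub)).ge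
  obtain ⟨H₁, hH₁K, hH₁, hr, hr0⟩ :=
    hK.exists_injOn_subset_measure_image_ne_zero D.μ D.meas_r hpos
  have hs0 : D.μ (D.s '' H₁) ≠ 0 := by
    intro h0
    rw [← lintegral_count_inter_fiber D.μ hr (hH₁.image_of_measurable_injOn D.meas_r hr),
      ← D.invariant H₁ hH₁] at hr0
    exact hr0 (lintegral_count_inter_fiber_eq_zero D.μ h0)
  obtain ⟨H, hH₁H, hH, hs, hs0⟩ :=
    hH₁.exists_injOn_subset_measure_image_ne_zero D.μ D.meas_s hs0
  exact ⟨H, hH₁H.trans hH₁K, hH, hs, hr.mono hH₁H, hs0⟩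

end DMGroupoid

/-- Exhaustion principle: if a family of sets is closed under increasing sequential unions and `m`
is a bounded monotone set function, every member extends to one on which `m` is maximal among
the members containing it. -/
theorem exists_superset_forall_superset_le {α : Type*} {P : Set α → Prop} {m : Set α → ENNReal}
    (hm : Monotone m) (hfin : m Set.univ ≠ ⊤)
    (hP : ∀ S : ℕ → Set α, Monotone S → (∀ n, P (S n)) → P (⋃ n, S n)) {E : Set α} (hE : P E) :
    ∃ M, P M ∧ E ⊆ M ∧ ∀ N, P N → M ⊆ N → m N ≤ m M := by
  have step : ∀ (n : ℕ) (S : {S // P S}), ∃ T : {S // P S}, S.1 ⊆ T.1 ∧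
      ∀ N, P N → S.1 ⊆ N → m N ≤ m T.1 + ((n : ENNReal) + 1)⁻¹ := by
    rintro n S
    set b := ⨆ T : {T : Set α // P T ∧ S.1 ⊆ T}, m T
    have hle : ∀ N, P N → S.1 ⊆ N → m N ≤ b := fun N h1 h2 =>
      le_iSup (fun T : {T : Set α // P T ∧ S.1 ⊆ T} => m T) ⟨N, h1, h2⟩
    have hbtop : b ≠ ⊤ :=
      ne_top_of_le_ne_top hfin (iSup_le fun T => hm (Set.subset_univ _))
    have hε : ((n : ENNReal) + 1)⁻¹ ≠ 0 := by simp
    by_cases hb0 : b = 0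
    · exact ⟨S, subset_rfl, fun N h1 h2 => (hle N h1 h2).trans (by simp [hb0])⟩
    · obtain ⟨T, hT⟩ := lt_iSup_iff.1 (ENNReal.sub_lt_self hbtop hb0 hε)
      exact ⟨⟨T, T.2.1⟩, T.2.2, fun N h1 h2 =>
        (hle N h1 h2).trans (tsub_le_iff_right.1 hT.le)⟩
  choose f hfS hf using step
  let S : ℕ → {S // P S} := fun n => Nat.rec ⟨E, hE⟩ (fun n T => f n T) n
  have hmono : Monotone fun n => (S n).1 := monotone_nat_of_le_succ fun n => hfS n (S n)
  refine ⟨⋃ n, (S n).1, hP _ hmono fun n => (S n).2, Set.subset_iUnion (fun n => (S n).1) 0,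
    fun N hN hMN => ?_⟩
  have hlim : Filter.Tendsto (fun n : ℕ => m (⋃ n, (S n).1) + ((n : ENNReal) + 1)⁻¹)
      Filter.atTop (nhds (m (⋃ n, (S n).1) + 0)) := by
    refine tendsto_const_nhds.add ?_
    have := (Filter.tendsto_add_atTop_iff_nat 1).2 ENNReal.tendsto_inv_nat_nhds_zero
    simpa using this
  rw [add_zero] at hlim
  refine ge_of_tendsto' hlim fun n => ?_
  refine (hf n (S n) N hN ((Set.subset_iUnion (fun n => (S n).1) n).trans hMN)).trans ?_
  gcongr
  exact hm (Set.subset_iUnion (fun n => (S n).1) (n + 1))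

/-- in an ergodic discrete measured groupoid with atom-free unit space
measure, given a finite-measure Borel set `F ⊆ G` and a Borel set `E ⊆ G \ F` on which
both `s` and `r` are injective, there is a Borel set `D'` with `E ⊆ D' ⊆ G \ F`, with
`s`, `r` injective on `D'` and `s(D') = G⁰` (hence also `r(D') = G⁰`) up to null sets. -/
theorem exists_full_partial_isomorphism {G X : Type}
    [MeasurableSpace G] [MeasurableSpace X]
    [StandardBorelSpace G] [StandardBorelSpace X]
    (D : DMGroupoid G X) [IsProbabilityMeasure D.μ]
    (herg : D.SatErgodic) (hatom : ∀ x : X, D.μ {x} = 0)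
    (F : Set G) (hF : MeasurableSet F) (hFfin : D.gMeasure F ≠ ⊤)
    (E : Set G) (hE : MeasurableSet E) (hEF : E ⊆ Fᶜ)
    (hsE : Set.InjOn D.s E) (hrE : Set.InjOn D.r E) :
    ∃ D' : Set G, MeasurableSet D' ∧ E ⊆ D' ∧ D' ⊆ Fᶜ ∧
      Set.InjOn D.s D' ∧ Set.InjOn D.r D' ∧
      D.μ (D.s '' D')ᶜ = 0 ∧ D.μ (D.r '' D')ᶜ = 0 := by
  let P : Set G → Prop := fun S =>
    MeasurableSet S ∧ S ⊆ Fᶜ ∧ Set.InjOn D.s S ∧ Set.InjOn D.r S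
  obtain ⟨M, ⟨hM, hMF, hs, hr⟩, hEM, hmax⟩ := exists_superset_forall_superset_le (P := P)
    (m := fun S => D.μ (D.s '' S)) (fun S T h => measure_mono (Set.image_mono h))
    (measure_ne_top _ _) (fun S hS hPS => ⟨MeasurableSet.iUnion fun n => (hPS n).1,
      Set.iUnion_subset fun n => (hPS n).2.1,
      Set.inj_on_iUnion_of_directed hS.directed_le fun n => (hPS n).2.2.1,
      Set.inj_on_iUnion_of_directed hS.directed_le fun n => (hPS n).2.2.2⟩)
    (⟨hE, hEF, hsE, hrE⟩ : P E)
  have hsM := hM.image_of_measurable_injOn D.meas_s hs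
  have hrM := hM.image_of_measurable_injOn D.meas_r hr
  have heq : D.μ (D.s '' M)ᶜ = D.μ (D.r '' M)ᶜ := by
    rw [prob_compl_eq_one_sub hsM, prob_compl_eq_one_sub hrM, D.measure_source_image_eq hM hs hr]
  suffices h : D.μ (D.s '' M)ᶜ = 0 from ⟨M, hM, hEM, hMF, hs, hr, h, heq ▸ h⟩
  by_contra h0
  obtain ⟨H, hHK, hH, hsH, hrH, hH0⟩ := D.exists_partial_isomorphism_between herg hatom hF hFfin
    hsM.compl hrM.compl h0 (heq ▸ h0)
  have hdisj : Disjoint M H :=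
    Set.disjoint_left.2 fun γ hγM hγH => (hHK hγH).1.1 ⟨γ, hγM, rfl⟩
  have hPMH : P (M ∪ H) := ⟨hM.union hH, Set.union_subset hMF fun γ hγ => (hHK hγ).2,
    (Set.injOn_union hdisj).2 ⟨hs, hsH, fun a ha b hb h => (hHK hb).1.1 ⟨a, ha, h⟩⟩,
    (Set.injOn_union hdisj).2 ⟨hr, hrH, fun a ha b hb h => (hHK hb).1.2 ⟨a, ha, h⟩⟩⟩
  have hle := hmax _ hPMH Set.subset_union_left
  have hdisj' : Disjoint (D.s '' M) (D.s '' H) :=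
    Set.disjoint_right.2 fun x ⟨γ, hγ, hx⟩ => hx ▸ (hHK hγ).1.1
  simp only [Set.image_union] at hle
  rw [measure_union hdisj' (hH.image_of_measurable_injOn D.meas_s hsH)] at hle
  exact (ENNReal.lt_add_right (measure_ne_top _ _) hH0).not_ge hle
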